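/- Let γ > 0, p > 1, a > 0, b > 0, and let β ≥ 2. Suppose w is twice continuously differentiable on [0,∞), w ≢ 0, and for almost every t ≥ 0, w''(t) + a·w(t) ≥ b·(₀I_t^γ (|w|^p))(t). Then liminf_{t→+∞} t^{1−γ−β}·(₀I_t^β w)(t) > 0. -/

import Mathlib

/-!
Write `ω = √a`, `F = w'' + a w` and `k(τ) = (τ - sin (ω τ) / ω) / a`, the nonnegative kernel with
`k'' + a k = τ`, `k(0) = k'(0) = 0`. Integrating by parts twice gives, for the second primitive
`V = ₀I_t² w`,
`V(t) = ∫₀ᵗ k(t-s) F(s) ds + k(t) w'(0) + k'(t) w(0)` (`duhamel`),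
where the last two terms are `O(1 + t)`. Since `w ≢ 0`, `₀I_t^γ |w|^p` is at least a constant times
`t^(γ-1)` (`rlInt_lower`), so the Duhamel integral is at least a constant times `t^(γ+1)`, which
dominates `O(1 + t)` because `γ > 0` (`second_primitive_lower`). This is the case `β = 2`. For
`β > 2`, `₀I_t^β w` is the fractional integral of order `β - 2` of `V` (`frac_by_parts`), and the
lower bound on `V` carries over (`frac_lower`).
-/

open MeasureTheory Filter

/-- Riemann–Liouville fractional integral of order `σ` based at `0`:
`(₀I_t^σ f)(t) = (1/Γ(σ)) ∫₀ᵗ (t−s)^{σ−1} f(s) ds`. -/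
noncomputable def rlInt (σ : ℝ) (f : ℝ → ℝ) (t : ℝ) : ℝ :=
  (1 / Real.Gamma σ) * ∫ s in (0:ℝ)..t, (t - s) ^ (σ - 1) * f s

/-- Powers of comparable numbers are comparable, whatever the sign of the exponent. -/
lemma rpow_comparable (e t y : ℝ) (ht : 0 < t) (h1 : t / 8 ≤ y) (h2 : y ≤ t) :
    (1 / 8 : ℝ) ^ |e| * t ^ e ≤ y ^ e := by
  have hx1 : 1 / 8 ≤ y / t := by rw [le_div_iff₀ ht]; linarith
  have hx2 : y / t ≤ 1 := by rw [div_le_one ht]; exact h2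
  have hx0 : 0 < y / t := by linarith
  have hy : y = y / t * t := by field_simp
  have hye : y ^ e = (y / t) ^ e * t ^ e := by rw [← Real.mul_rpow hx0.le ht.le, ← hy]
  rw [hye]
  refine mul_le_mul_of_nonneg_right ?_ (by positivity)
  calc (1 / 8 : ℝ) ^ |e| ≤ (y / t) ^ |e| := Real.rpow_le_rpow (by norm_num) hx1 (abs_nonneg e)
    _ ≤ (y / t) ^ e := Real.rpow_le_rpow_of_exponent_ge hx0 hx2 (le_abs_self e)

lemma intervalIntegrable_kernel_mul (e : ℝ) (he : -1 < e) (f : ℝ → ℝ) (hf : Continuous f)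
    (t x y : ℝ) : IntervalIntegrable (fun s => (t - s) ^ e * f s) volume x y := by
  have h : IntervalIntegrable (fun s : ℝ => s ^ e) volume (t - x) (t - y) :=
    intervalIntegral.intervalIntegrable_rpow' he
  have h' := h.comp_sub_left t
  simp only [sub_sub_cancel] at h'
  exact h'.mul_continuousOn hf.continuousOn

lemma rlInt_nonneg (γ : ℝ) (hγ : 0 < γ) (f : ℝ → ℝ) (hf0 : ∀ s, 0 ≤ f s) (t : ℝ) (ht : 0 ≤ t) :
    0 ≤ rlInt γ f t := by
  unfold rlInt
  have := Real.Gamma_pos_of_pos hγ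
  refine mul_nonneg (by positivity) (intervalIntegral.integral_nonneg ht fun s hs => ?_)
  exact mul_nonneg (Real.rpow_nonneg (by linarith [hs.2]) _) (hf0 s)

/-- The fractional integral of a nonzero nonnegative function grows at least like `t ^ (γ - 1)`,
uniformly over arguments comparable to `t`. -/
lemma rlInt_lower (γ : ℝ) (hγ : 0 < γ) (f : ℝ → ℝ) (hf : Continuous f) (hf0 : ∀ s, 0 ≤ f s)
    (t₀ : ℝ) (ht₀ : 0 ≤ t₀) (hpos : 0 < f t₀) :
    ∃ c > 0, ∃ T > 0, ∀ t ≥ T, ∀ s, t / 4 ≤ s → s ≤ t / 2 → c * t ^ (γ - 1) ≤ rlInt γ f s := by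
  have hG := Real.Gamma_pos_of_pos hγ
  have hA : 0 < ∫ r in (0:ℝ)..(t₀ + 1), f r :=
    intervalIntegral.integral_pos (by linarith) hf.continuousOn (fun x _ => hf0 x)
      ⟨t₀, ⟨ht₀, by linarith⟩, hpos⟩
  set A := ∫ r in (0:ℝ)..(t₀ + 1), f r with hAdef
  refine ⟨1 / Real.Gamma γ * ((1 / 8 : ℝ) ^ |γ - 1| * A), by positivity, 8 * (t₀ + 1),
    by positivity, ?_⟩
  intro t ht s hs1 hs2
  have htpos : 0 < t := by linarith
  unfold rlInt
  rw [mul_assoc]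
  refine mul_le_mul_of_nonneg_left ?_ (by positivity)
  have hint := intervalIntegrable_kernel_mul (γ - 1) (by linarith) f hf s
  calc (1 / 8 : ℝ) ^ |γ - 1| * A * t ^ (γ - 1)
      = ∫ r in (0:ℝ)..(t₀ + 1), (1 / 8 : ℝ) ^ |γ - 1| * t ^ (γ - 1) * f r := by
        rw [intervalIntegral.integral_const_mul]; ring
    _ ≤ ∫ r in (0:ℝ)..(t₀ + 1), (s - r) ^ (γ - 1) * f r := by
        refine intervalIntegral.integral_mono_on (by linarith)
          ((hf.intervalIntegrable _ _).const_mul _) (hint _ _) fun r hr => ?_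
        refine mul_le_mul_of_nonneg_right ?_ (hf0 r)
        exact rpow_comparable _ _ _ htpos (by linarith [hr.2]) (by linarith [hr.1])
    _ ≤ ∫ r in (0:ℝ)..s, (s - r) ^ (γ - 1) * f r := by
        rw [← intervalIntegral.integral_add_adjacent_intervals (hint 0 (t₀ + 1)) (hint (t₀ + 1) s)]
        have : 0 ≤ ∫ r in (t₀ + 1)..s, (s - r) ^ (γ - 1) * f r :=
          intervalIntegral.integral_nonneg (by linarith) fun r hr =>
            mul_nonneg (Real.rpow_nonneg (by linarith [hr.2]) _) (hf0 r)
        linarith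

/-- Variation of constants for `w'' + ω² w`, integrated twice: the kernel is
`k(τ) = (τ - sin (ω τ) / ω) / ω²`. -/
lemma duhamel (ω : ℝ) (hω : 0 < ω) (w : ℝ → ℝ) (hw : ContDiff ℝ 2 w) (t : ℝ) :
    ∫ s in (0:ℝ)..t, (t - s) * w s =
      (∫ s in (0:ℝ)..t, ((t - s) - Real.sin (ω * (t - s)) / ω) / ω ^ 2 *
        (deriv (deriv w) s + ω ^ 2 * w s))
      + (t - Real.sin (ω * t) / ω) / ω ^ 2 * deriv w 0 + (1 - Real.cos (ω * t)) / ω ^ 2 * w 0 := by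
  have hcw : Continuous w := hw.continuous
  have hw1 : ContDiff ℝ 1 (deriv w) := ((contDiff_succ_iff_deriv (n := 1)).1 hw).2.2
  have hcw2 : Continuous (deriv (deriv w)) := hw1.continuous_deriv le_rfl
  have hd0 : ∀ s, HasDerivAt w (deriv w s) s := fun s =>
    (hw.differentiable (by norm_num) s).hasDerivAt
  have hd1 : ∀ s, HasDerivAt (deriv w) (deriv (deriv w) s) s := fun s =>
    (hw1.differentiable (by norm_num) s).hasDerivAt
  have hΦ : ∀ s, HasDerivAt
      (fun s => ((t - s) - Real.sin (ω * (t - s)) / ω) / ω ^ 2 * deriv w s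
        + (1 - Real.cos (ω * (t - s))) / ω ^ 2 * w s)
      (((t - s) - Real.sin (ω * (t - s)) / ω) / ω ^ 2 * (deriv (deriv w) s + ω ^ 2 * w s)
        - (t - s) * w s) s := by
    intro s
    have h0 : HasDerivAt (fun s => t - s) (-1) s := by simpa using (hasDerivAt_id s).const_sub t
    have h1 : HasDerivAt (fun s => ω * (t - s)) (ω * -1) s := h0.const_mul ω
    have hk := ((h0.sub (h1.sin.div_const ω)).div_const (ω ^ 2)).mul (hd1 s)
    have hk' := ((h1.cos.const_sub 1).div_const (ω ^ 2)).mul (hd0 s)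
    refine (hk.add hk').congr_deriv ?_
    simp only [Pi.sub_apply]
    field_simp
    ring
  have hc1 : Continuous fun s => ((t - s) - Real.sin (ω * (t - s)) / ω) / ω ^ 2 *
      (deriv (deriv w) s + ω ^ 2 * w s) := by fun_prop
  have hc2 : Continuous fun s => (t - s) * w s := by fun_prop
  have h := intervalIntegral.integral_eq_sub_of_hasDerivAt (a := 0) (b := t) (fun s _ => hΦ s)
    ((hc1.sub hc2).intervalIntegrable _ _)
  rw [intervalIntegral.integral_sub (hc1.intervalIntegrable _ _) (hc2.intervalIntegrable _ _)] at h
  simp only [sub_self, mul_zero, Real.sin_zero, Real.cos_zero, zero_div, zero_mul, sub_zero,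
    add_zero] at h
  linarith

/-- The second primitive of `w` is bounded below by `c t^(γ+1) - C₁ t - C₂`. -/
lemma second_primitive_lower
    (γ a b : ℝ) (w f : ℝ → ℝ) (hγ : 0 < γ) (ha : 0 < a) (hb : 0 < b)
    (hw : ContDiff ℝ 2 w) (hf : Continuous f) (hf0 : ∀ s, 0 ≤ f s)
    (t₀ : ℝ) (ht₀ : 0 ≤ t₀) (hpos : 0 < f t₀)
    (hineq : ∀ᵐ t ∂(volume.restrict (Set.Ici (0:ℝ))),
      deriv (deriv w) t + a * w t ≥ b * rlInt γ f t) :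
    ∃ c > 0, ∃ C₁ ≥ 0, ∃ C₂ : ℝ, ∀ t ≥ 0,
      c * t ^ (γ + 1) - C₁ * t - C₂ ≤ ∫ s in (0:ℝ)..t, (t - s) * w s := by
  obtain ⟨ω, hω, rfl⟩ : ∃ ω, 0 < ω ∧ a = ω ^ 2 :=
    ⟨√a, Real.sqrt_pos.2 ha, (Real.sq_sqrt ha.le).symm⟩
  have hcw : Continuous w := hw.continuous
  have hw1 : ContDiff ℝ 1 (deriv w) := ((contDiff_succ_iff_deriv (n := 1)).1 hw).2.2
  have hcw2 : Continuous (deriv (deriv w)) := hw1.continuous_deriv le_rfl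
  obtain ⟨c, hc, T, hT, hlow⟩ := rlInt_lower γ hγ f hf hf0 t₀ ht₀ hpos
  have hsin : ∀ τ : ℝ, 0 ≤ τ → |Real.sin (ω * τ) / ω| ≤ τ := by
    intro τ hτ
    rw [abs_div, abs_of_pos hω, div_le_iff₀ hω]
    refine Real.abs_sin_le_abs.trans_eq ?_
    rw [abs_of_nonneg (by positivity), mul_comm]
  have hsin' : ∀ τ : ℝ, |Real.sin (ω * τ) / ω| ≤ 1 / ω := by
    intro τ
    rw [abs_div, abs_of_pos hω]
    gcongr
    exact Real.abs_sin_le_one _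
  set c₂ := c * b / (16 * ω ^ 2) with hc₂
  have hc₂pos : 0 < c₂ := by positivity
  set C₁ := 2 / ω ^ 2 * |deriv w 0| with hC₁
  set C₀ := 2 / ω ^ 2 * |w 0| with hC₀
  set T₁ := max T (4 / ω) with hT₁
  have hT₁pos : 0 < T₁ := lt_max_of_lt_left hT
  -- For large `t` only `s ∈ [t/4, t/2]` is kept; there `k(t - s) ≥ t / (4 ω²)`.
  have hlarge : ∀ t ≥ T₁, c₂ * t ^ (γ + 1) - C₁ * t - C₀ ≤ ∫ s in (0:ℝ)..t, (t - s) * w s := by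
    intro t ht
    have htT : T ≤ t := (le_max_left _ _).trans ht
    have htω : 4 / ω ≤ t := (le_max_right _ _).trans ht
    have htpos : 0 < t := hT₁pos.trans_le ht
    rw [duhamel ω hω w hw t]
    set g : ℝ → ℝ := fun s => ((t - s) - Real.sin (ω * (t - s)) / ω) / ω ^ 2 *
        (deriv (deriv w) s + ω ^ 2 * w s) with hg
    have hgc : Continuous g := by rw [hg]; fun_prop
    have hint : ∀ x y, IntervalIntegrable g volume x y := fun x y => hgc.intervalIntegrable x y
    have hk0 : ∀ τ : ℝ, 0 ≤ τ → 0 ≤ (τ - Real.sin (ω * τ) / ω) / ω ^ 2 := fun τ hτ =>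
      div_nonneg (by linarith [le_abs_self (Real.sin (ω * τ) / ω), hsin τ hτ]) (by positivity)
    have hgnn : ∀ᵐ s ∂(volume.restrict (Set.Ici (0:ℝ))), s ≤ t → 0 ≤ g s := by
      filter_upwards [hineq, ae_restrict_mem measurableSet_Ici] with s hs hs0 hst
      exact mul_nonneg (hk0 _ (by linarith))
        ((mul_nonneg hb.le (rlInt_nonneg γ hγ f hf0 s hs0)).trans hs)
    have hnn : ∀ x y, 0 ≤ x → x ≤ y → y ≤ t → 0 ≤ ∫ s in x..y, g s := by
      intro x y hx hxy hy
      refine intervalIntegral.integral_nonneg_of_ae_restrict hxy ?_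
      have hsub : Set.Icc x y ⊆ Set.Ici (0:ℝ) := fun s hs => hx.trans hs.1
      filter_upwards [ae_restrict_of_ae_restrict_of_subset hsub hgnn,
        ae_restrict_mem measurableSet_Icc] with s hs hsm
      exact hs (hsm.2.trans hy)
    have hmid : c₂ * t ^ (γ + 1) ≤ ∫ s in (t / 4)..(t / 2), g s := by
      have h1 : ∫ s in (t / 4)..(t / 2), t / (4 * ω ^ 2) * (b * (c * t ^ (γ - 1)))
          = c₂ * t ^ (γ + 1) := by
        rw [intervalIntegral.integral_const, smul_eq_mul, show γ + 1 = (γ - 1) + 2 by ring,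
          Real.rpow_add htpos, Real.rpow_two, hc₂]
        field_simp
        ring
      rw [← h1]
      refine intervalIntegral.integral_mono_ae_restrict (by linarith)
        intervalIntegrable_const (hint _ _) ?_
      have hsub : Set.Icc (t / 4) (t / 2) ⊆ Set.Ici (0:ℝ) := fun s hs =>
        (by positivity : (0:ℝ) ≤ t / 4).trans hs.1
      filter_upwards [ae_restrict_of_ae_restrict_of_subset hsub hineq,
        ae_restrict_mem measurableSet_Icc] with s hs hsm
      have hJ := hlow t htT s hsm.1 hsm.2
      refine mul_le_mul ?_ ((mul_le_mul_of_nonneg_left hJ hb.le).trans hs) (by positivity)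
        (hk0 _ (by linarith [hsm.2]))
      rw [← div_div]
      refine div_le_div_of_nonneg_right ?_ (by positivity)
      have := (le_abs_self _).trans (hsin' (t - s))
      have h4 : 4 / ω = 4 * (1 / ω) := by ring
      linarith [hsm.2]
    have hsplit : ∫ s in (0:ℝ)..t, g s = (∫ s in (0:ℝ)..(t / 4), g s)
        + (∫ s in (t / 4)..(t / 2), g s) + ∫ s in (t / 2)..t, g s := by
      rw [intervalIntegral.integral_add_adjacent_intervals (hint _ _) (hint _ _),
        intervalIntegral.integral_add_adjacent_intervals (hint _ _) (hint _ _)]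
    have e1 := hnn 0 (t / 4) le_rfl (by linarith) (by linarith)
    have e2 := hnn (t / 2) t (by linarith) (by linarith) le_rfl
    have b1 : -(C₁ * t) ≤ (t - Real.sin (ω * t) / ω) / ω ^ 2 * deriv w 0 := by
      refine (neg_le_neg ?_).trans (neg_abs_le _)
      rw [abs_mul, abs_of_nonneg (hk0 t htpos.le), hC₁]
      have h := neg_abs_le (Real.sin (ω * t) / ω)
      have h' := hsin t htpos.le
      calc _ ≤ (2 * t) / ω ^ 2 * |deriv w 0| := by gcongr; linarith
        _ = _ := by ring
    have b2 : -C₀ ≤ (1 - Real.cos (ω * t)) / ω ^ 2 * w 0 := by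
      refine (neg_le_neg ?_).trans (neg_abs_le _)
      have h1 := Real.cos_le_one (ω * t)
      have h2 := Real.neg_one_le_cos (ω * t)
      rw [abs_mul, abs_of_nonneg (div_nonneg (by linarith) (by positivity)), hC₀]
      gcongr
      linarith
    linarith
  -- On the compact interval `[0, T₁]` the constant `C₂` absorbs everything.
  have hVc : Continuous fun t : ℝ => ∫ s in (0:ℝ)..t, (t - s) * w s :=
    intervalIntegral.continuous_parametric_intervalIntegral_of_continuous
      (f := fun t s => (t - s) * w s) (by fun_prop) continuous_id
  obtain ⟨D, hD⟩ := (isCompact_Icc (a := (0:ℝ)) (b := T₁)).exists_bound_of_continuousOn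
    hVc.continuousOn
  have hD0 : 0 ≤ D := (norm_nonneg _).trans (hD 0 ⟨le_rfl, hT₁pos.le⟩)
  have hC₁0 : 0 ≤ C₁ := by positivity
  have hC₀0 : 0 ≤ C₀ := by positivity
  refine ⟨c₂, hc₂pos, C₁, hC₁0, C₀ + D + c₂ * T₁ ^ (γ + 1), ?_⟩
  intro t ht
  have hX : 0 ≤ c₂ * T₁ ^ (γ + 1) := by positivity
  rcases le_total T₁ t with h | h
  · linarith [hlarge t h]
  · have h1 := hD t ⟨ht, h⟩
    rw [Real.norm_eq_abs] at h1
    have h2 := (abs_le.1 h1).1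
    have h3 : c₂ * t ^ (γ + 1) ≤ c₂ * T₁ ^ (γ + 1) := by gcongr
    have h4 : 0 ≤ C₁ * t := by positivity
    linarith

/-- The semigroup law `₀I_t^β w = ₀I_t^{β-2} (₀I_t² w)` without the Gamma factors. The kernel
`(t - s) ^ (β - 3)` may be singular at `s = t`. -/
lemma frac_by_parts (β : ℝ) (hβ : 2 < β) (w W V : ℝ → ℝ) (hw : Continuous w)
    (hW : ∀ s, HasDerivAt W (w s) s) (hV : ∀ s, HasDerivAt V (W s) s) (hW0 : W 0 = 0)
    (hV0 : V 0 = 0) (t : ℝ) (ht : 0 ≤ t) :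
    ∫ s in (0:ℝ)..t, (t - s) ^ (β - 1) * w s =
      (β - 1) * (β - 2) * ∫ s in (0:ℝ)..t, (t - s) ^ (β - 3) * V s := by
  have hWc : Continuous W := continuous_iff_continuousAt.2 fun s => (hW s).continuousAt
  have hVc : Continuous V := continuous_iff_continuousAt.2 fun s => (hV s).continuousAt
  have i1 := intervalIntegrable_kernel_mul (β - 1) (by linarith) w hw t 0 t
  have i2 := (intervalIntegrable_kernel_mul (β - 3) (by linarith) V hVc t 0 t).const_mul
    ((β - 1) * (β - 2))
  have hcont : ∀ e : ℝ, 0 ≤ e → Continuous fun s : ℝ => (t - s) ^ e := fun e he =>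
    (Real.continuous_rpow_const he).comp (continuous_const.sub continuous_id)
  have h := intervalIntegral.integral_eq_sub_of_hasDerivAt_of_le ht
    (f := fun s => (t - s) ^ (β - 1) * W s + (β - 1) * ((t - s) ^ (β - 2) * V s))
    (f' := fun s => (t - s) ^ (β - 1) * w s - (β - 1) * (β - 2) * ((t - s) ^ (β - 3) * V s))
    (((hcont _ (by linarith)).mul hWc).add
      (((hcont _ (by linarith)).mul hVc).const_mul _)).continuousOn
    (fun s hs => by
      have h0 : HasDerivAt (fun s => t - s) (-1) s := by
        simpa using (hasDerivAt_id s).const_sub t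
      have hne : t - s ≠ 0 := by linarith [hs.2]
      have hp1 := (h0.rpow_const (p := β - 1) (Or.inl hne)).mul (hW s)
      have hp2 := ((h0.rpow_const (p := β - 2) (Or.inl hne)).mul (hV s)).const_mul (β - 1)
      refine (hp1.add hp2).congr_deriv ?_
      rw [show β - 1 - 1 = β - 2 by ring, show β - 2 - 1 = β - 3 by ring]
      ring)
    (i1.sub i2)
  rw [intervalIntegral.integral_sub i1 i2, intervalIntegral.integral_const_mul] at h
  simp only [sub_self, hW0, hV0, mul_zero, add_zero,
    Real.zero_rpow (by linarith : β - 1 ≠ 0), Real.zero_rpow (by linarith : β - 2 ≠ 0),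
    zero_mul, sub_zero] at h
  linarith

lemma integral_kernel (e : ℝ) (he : 0 < e) (t x : ℝ) :
    ∫ s in x..t, (t - s) ^ (e - 1) = (t - x) ^ e / e := by
  rw [intervalIntegral.integral_comp_sub_left (fun s => s ^ (e - 1)) t, sub_self,
    integral_rpow (Or.inl (by linarith)), sub_add_cancel, Real.zero_rpow he.ne', sub_zero]

/-- A lower bound `c t^(γ+1) - C₁ t - C₂` on the second primitive of `w` gives the corresponding
bound, with an extra factor `t^(β-2)`, for the primitive of order `β ≥ 2`. -/
lemma frac_lower (β γ : ℝ) (hβ : 2 ≤ β) (hγ : 0 < γ) (w : ℝ → ℝ) (hw : Continuous w)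
    (c C₁ C₂ : ℝ) (hc : 0 < c) (hC₁ : 0 ≤ C₁)
    (hV : ∀ t ≥ 0, c * t ^ (γ + 1) - C₁ * t - C₂ ≤ ∫ s in (0:ℝ)..t, (t - s) * w s) :
    ∃ c' > 0, ∃ D₁ D₂ : ℝ, ∀ t > 0,
      t ^ (β - 2) * (c' * t ^ (γ + 1) - D₁ * t - D₂)
        ≤ ∫ s in (0:ℝ)..t, (t - s) ^ (β - 1) * w s := by
  rcases hβ.eq_or_lt with rfl | hβ
  · refine ⟨c, hc, C₁, C₂, fun t ht => ?_⟩
    have := hV t ht.le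
    norm_num
    linarith
  set W : ℝ → ℝ := fun t => ∫ s in (0:ℝ)..t, w s with hWdef
  have hW : ∀ s, HasDerivAt W (w s) s := fun s => hw.integral_hasStrictDerivAt 0 s |>.hasDerivAt
  have hWc : Continuous W := continuous_iff_continuousAt.2 fun s => (hW s).continuousAt
  set V : ℝ → ℝ := fun t => ∫ s in (0:ℝ)..t, W s with hVdef
  have hVd : ∀ s, HasDerivAt V (W s) s := fun s => hWc.integral_hasStrictDerivAt 0 s |>.hasDerivAt
  have hVc : Continuous V := continuous_iff_continuousAt.2 fun s => (hVd s).continuousAt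
  have hW0 : W 0 = 0 := intervalIntegral.integral_same
  have hV0 : V 0 = 0 := intervalIntegral.integral_same
  have hVeq : ∀ t, ∫ s in (0:ℝ)..t, (t - s) * w s = V t := by
    intro t
    have h := intervalIntegral.integral_eq_sub_of_hasDerivAt (a := 0) (b := t)
      (f := fun s => (t - s) * W s + V s) (f' := fun s => (t - s) * w s)
      (fun s _ => by
        have h0 : HasDerivAt (fun s => t - s) (-1) s := by
          simpa using (hasDerivAt_id s).const_sub t
        refine ((h0.mul (hW s)).add (hVd s)).congr_deriv ?_
        ring)
      ((by fun_prop : Continuous fun s => (t - s) * w s).intervalIntegrable _ _)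
    rw [h]
    simp [hW0, hV0]
  have hV' : ∀ t ≥ 0, c * t ^ (γ + 1) - C₁ * t - C₂ ≤ V t := fun t ht => hVeq t ▸ hV t ht
  have hB : 0 < β - 2 := by linarith
  have hB1 : 0 < β - 1 := by linarith
  refine ⟨(β - 1) * (c * (1 / 2) ^ (γ + 1) * (1 / 2) ^ (β - 2)), by positivity,
    (β - 1) * C₁, (β - 1) * C₂, fun t ht => ?_⟩
  rw [frac_by_parts β hβ w W V hw hW hVd hW0 hV0 t ht.le]
  set M := C₁ * t + C₂ with hM
  have hi : ∀ x y, IntervalIntegrable (fun s => (t - s) ^ (β - 3) * (V s + M)) volume x y :=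
    fun x y => intervalIntegrable_kernel_mul (β - 3) (by linarith) _ (by fun_prop) t x y
  have hi1 : ∀ (k x y : ℝ), IntervalIntegrable (fun s => (t - s) ^ (β - 3) * k) volume x y :=
    fun k x y => intervalIntegrable_kernel_mul (β - 3) (by linarith) _ continuous_const t x y
  have hiV : ∀ x y, IntervalIntegrable (fun s => (t - s) ^ (β - 3) * V s) volume x y :=
    fun x y => intervalIntegrable_kernel_mul (β - 3) (by linarith) _ hVc t x y
  have hker : ∀ k x : ℝ, ∫ s in x..t, (t - s) ^ (β - 3) * k = (t - x) ^ (β - 2) / (β - 2) * k := by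
    intro k x
    rw [intervalIntegral.integral_mul_const, ← integral_kernel (β - 2) hB,
      show β - 2 - 1 = β - 3 by ring]
  have hVM : ∀ s, 0 ≤ s → s ≤ t → c * s ^ (γ + 1) ≤ V s + M := by
    intro s hs hst
    have h1 := hV' s hs
    have h2 : C₁ * s ≤ C₁ * t := by gcongr
    linarith
  -- The shifted function `V + M` is nonnegative on `[0, t]`, so `[0, t/2]` can be discarded.
  have hlow : (t / 2) ^ (β - 2) / (β - 2) * (c * (t / 2) ^ (γ + 1))
      ≤ ∫ s in (0:ℝ)..t, (t - s) ^ (β - 3) * (V s + M) := by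
    rw [← intervalIntegral.integral_add_adjacent_intervals (hi 0 (t / 2)) (hi (t / 2) t)]
    have h0 : 0 ≤ ∫ s in (0:ℝ)..(t / 2), (t - s) ^ (β - 3) * (V s + M) := by
      refine intervalIntegral.integral_nonneg (by linarith) fun s hs => ?_
      refine mul_nonneg (Real.rpow_nonneg (by linarith [hs.2]) _)
        (le_trans ?_ (hVM s hs.1 (by linarith [hs.2])))
      exact mul_nonneg hc.le (Real.rpow_nonneg hs.1 _)
    have h1 : (t / 2) ^ (β - 2) / (β - 2) * (c * (t / 2) ^ (γ + 1))
        ≤ ∫ s in (t / 2)..t, (t - s) ^ (β - 3) * (V s + M) := by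
      have h2 := hker (c * (t / 2) ^ (γ + 1)) (t / 2)
      rw [show t - t / 2 = t / 2 by ring] at h2
      rw [← h2]
      refine intervalIntegral.integral_mono_on (by linarith) (hi1 _ _ _) (hi _ _) fun s hs => ?_
      refine mul_le_mul_of_nonneg_left (le_trans ?_ (hVM s (by linarith [hs.1]) hs.2))
        (Real.rpow_nonneg (by linarith [hs.2]) _)
      have := hs.1
      gcongr
    linarith
  have hsum : ∫ s in (0:ℝ)..t, (t - s) ^ (β - 3) * (V s + M)
      = (∫ s in (0:ℝ)..t, (t - s) ^ (β - 3) * V s) + t ^ (β - 2) / (β - 2) * M := by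
    simp only [mul_add]
    rw [intervalIntegral.integral_add (hiV _ _) (hi1 _ _ _), hker, sub_zero]
  rw [hsum] at hlow
  have hh : ∀ e : ℝ, (t / 2) ^ e = (1 / 2) ^ e * t ^ e := fun e => by
    rw [← Real.mul_rpow (by norm_num) ht.le]; congr 1; ring
  rw [hh, hh] at hlow
  have hfin := mul_le_mul_of_nonneg_left hlow (by positivity : 0 ≤ (β - 1) * (β - 2))
  have e1 : (β - 1) * (β - 2) * ((1 / 2) ^ (β - 2) * t ^ (β - 2) / (β - 2) *
      (c * ((1 / 2) ^ (γ + 1) * t ^ (γ + 1))))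
      = t ^ (β - 2) * ((β - 1) * (c * (1 / 2) ^ (γ + 1) * (1 / 2) ^ (β - 2)) * t ^ (γ + 1)) := by
    generalize ((1:ℝ) / 2) ^ (β - 2) = P
    generalize ((1:ℝ) / 2) ^ (γ + 1) = Q
    field_simp
  have e2 : (β - 1) * (β - 2) * (t ^ (β - 2) / (β - 2) * M) = t ^ (β - 2) * ((β - 1) * M) := by
    field_simp
  rw [e1, mul_add, e2, hM] at hfin
  linarith

/-- Corollary 2.6 (iii): for β ≥ 2, liminf t^{1−γ−β} (₀I_t^β w)(t) > 0. -/
theorem liminf_pos_wave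
    (γ p a b : ℝ) (w : ℝ → ℝ)
    (hγ : 0 < γ) (hp : 1 < p) (ha : 0 < a) (hb : 0 < b)
    (hw : ContDiff ℝ 2 w)
    (hw0 : ∃ t : ℝ, 0 ≤ t ∧ w t ≠ 0)
    (hineq : ∀ᵐ t ∂(volume.restrict (Set.Ici (0:ℝ))),
      deriv (deriv w) t + a * w t ≥ b * rlInt γ (fun s => |w s| ^ p) t)
    (β : ℝ) (hβ : 2 ≤ β) :
    0 < liminf (fun t : ℝ => ((t ^ (1 - γ - β) * rlInt β w t : ℝ) : EReal)) atTop := by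
  obtain ⟨t₀, ht₀, hne⟩ := hw0
  have hf : Continuous fun s => |w s| ^ p :=
    (Real.continuous_rpow_const (by linarith)).comp hw.continuous.abs
  obtain ⟨c, hc, C₁, hC₁, C₂, hV⟩ := second_primitive_lower γ a b w (fun s => |w s| ^ p)
    hγ ha hb hw hf (fun s => by positivity) t₀ ht₀ (Real.rpow_pos_of_pos (abs_pos.2 hne) _) hineq
  obtain ⟨c', hc', D₁, D₂, hI⟩ := frac_lower β γ hβ hγ w hw.continuous c C₁ C₂ hc hC₁ hV
  have hG : 0 < Real.Gamma β := Real.Gamma_pos_of_pos (by linarith)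
  have hlim : Tendsto (fun t : ℝ => c' - D₁ * t ^ (-γ) - D₂ * t ^ (-(γ + 1))) atTop
      (nhds (c' - D₁ * 0 - D₂ * 0)) :=
    (tendsto_const_nhds.sub ((tendsto_rpow_neg_atTop hγ).const_mul D₁)).sub
      ((tendsto_rpow_neg_atTop (by linarith)).const_mul D₂)
  have hev : ∀ᶠ t : ℝ in atTop, c' / 2 < c' - D₁ * t ^ (-γ) - D₂ * t ^ (-(γ + 1)) :=
    hlim.eventually_const_lt (by linarith)
  have hpos : (0 : EReal) < ((1 / Real.Gamma β * (c' / 2) : ℝ) : EReal) :=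
    EReal.coe_pos.2 (by positivity)
  refine hpos.trans_le (le_liminf_of_le (by isBoundedDefault) ?_)
  filter_upwards [hev, eventually_gt_atTop 0] with t h1 ht
  rw [EReal.coe_le_coe_iff]
  unfold rlInt
  rw [mul_left_comm]
  refine mul_le_mul_of_nonneg_left (h1.le.trans ?_) (by positivity)
  have h2 := mul_le_mul_of_nonneg_left (hI t ht) (Real.rpow_nonneg ht.le (1 - γ - β))
  refine le_of_eq_of_le ?_ h2
  rw [← mul_assoc, ← Real.rpow_add ht, show 1 - γ - β + (β - 2) = -(γ + 1) by ring,
    show -γ = -(γ + 1) + 1 by ring, Real.rpow_add ht (-(γ + 1)) 1, Real.rpow_one]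
  have h3 : t ^ (-(γ + 1)) * t ^ (γ + 1) = 1 := by
    rw [← Real.rpow_add ht]; simp
  linear_combination (-c') * h3
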